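/- arXiv:1607.05121 — 6 statements merged into one kernel-verified Lean document; each statement's English description precedes it below -/
import Mathlib

section
/- Let V be a finite-dimensional subspace of the space of complex sequences (functions ℕ → ℂ) such that V is invariant under the shift operator S (i.e., for every y ∈ V, the shifted sequence S y belongs to V) and the restriction of S to V is injective. Then there exist finitely many distinct nonzero complex numbers λ₁, …, λ_s and positive integers l₁, …, l_s such that V is the internal direct sum of the subspaces G_{λ₁,l₁}, …, G_{λ_s,l_s}. -/
/-!
The shift restricted to `V` is an endomorphism of a finite-dimensional complex space, so `V` is
the direct sum of its generalized eigenspaces `V ⊓ ker (S - c) ^ ∞`, finitely many of which are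
nonzero; injectivity of the shift excludes `c = 0`. What remains is to see that each nonzero one
is some `G c l`.

Put `N = S - c`. The kernel of `N` on all sequences is the line spanned by `n ↦ c ^ n`. Hence a
subspace which contains, for each `j < l`, a vector killed by `N ^ (j + 1)` but not by `N ^ j`
contains all of `ker N ^ l` (`ker_pow_le`). This is used twice. On sequences `c ^ n * f n` the
operator `N` acts as `c` times the forward difference of `f`, so for `c ≠ 0` the sequences
`c ^ n * n ^ j` show `ker N ^ l = G c l` (`genEigenspace_shiftOp`). If `l` is the nilpotency index
of `N` on `V ⊓ ker N ^ ∞`, then the iterates `N ^ i w` of a vector `w` with `N ^ (l - 1) w ≠ 0`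
show that `V` contains `ker N ^ l` (`exists_inf_maxGenEigenspace_eq`).
-/

open Polynomial

/-- The linear map sending a polynomial `p` to the sequence `n ↦ c ^ n * p n`. -/
noncomputable def seqOfPoly (c : ℂ) : Polynomial ℂ →ₗ[ℂ] (ℕ → ℂ) where
  toFun p := fun n => c ^ n * p.eval (n : ℂ)
  map_add' p q := by funext n; simp [mul_add]
  map_smul' a p := by funext n; simp; ring

/-- `G c m` is the space of sequences `n ↦ c ^ n * p n` with `p` a polynomial of degree `< m`. -/
noncomputable def G (c : ℂ) (m : ℕ) : Submodule ℂ (ℕ → ℂ) :=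
  (Polynomial.degreeLT ℂ m).map (seqOfPoly c)

/-- The shift operator on complex sequences, `(S y) n = y (n + 1)`. -/
def shiftOp : Module.End ℂ (ℕ → ℂ) where
  toFun y := fun n => y (n + 1)
  map_add' _ _ := rfl
  map_smul' _ _ := rfl

open Module.End

/-- If `ker N` is at most one-dimensional and `W` contains vectors of every height `j + 1 ≤ l`
with respect to `N`, then `W` contains `ker N ^ l`. -/
lemma ker_pow_le {M : Type*} [AddCommGroup M] [Module ℂ M] (N : Module.End ℂ M)
    (W : Submodule ℂ M) (e : M) (he : ∀ x, N x = 0 → ∃ a : ℂ, x = a • e) (l : ℕ)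
    (hW : ∀ j < l, ∃ w ∈ W, (N ^ j) w ≠ 0 ∧ (N ^ (j + 1)) w = 0) :
    LinearMap.ker (N ^ l) ≤ W := by
  induction l with
  | zero =>
    intro x hx
    have hx0 : x = 0 := by simpa using hx
    simp [hx0]
  | succ l ih =>
    intro x hx
    obtain ⟨w, hw, hw0, hw1⟩ := hW l (Nat.lt_succ_self l)
    rw [LinearMap.mem_ker, pow_succ', mul_apply] at hx
    rw [pow_succ', mul_apply] at hw1
    obtain ⟨a, ha⟩ := he _ hx
    obtain ⟨b, hb⟩ := he _ hw1
    have hb0 : b ≠ 0 := by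
      rintro rfl
      exact hw0 (by simpa using hb)
    have hmem : x - (a / b) • w ∈ W := by
      refine ih (fun j hj => hW j (by omega)) ?_
      rw [LinearMap.mem_ker, map_sub, map_smul, ha, hb, smul_smul, div_mul_cancel₀ _ hb0, sub_self]
    have := W.add_mem hmem (W.smul_mem (a / b) hw)
    simpa using this

lemma shiftOp_sub_apply (c : ℂ) (y : ℕ → ℂ) (n : ℕ) :
    (shiftOp - c • (1 : Module.End ℂ (ℕ → ℂ))) y n = y (n + 1) - c * y n := rfl

lemma ker_shiftOp_sub (c : ℂ) (y : ℕ → ℂ)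
    (hy : (shiftOp - c • (1 : Module.End ℂ (ℕ → ℂ))) y = 0) :
    ∃ a : ℂ, y = a • fun n : ℕ => c ^ n := by
  refine ⟨y 0, funext fun n => ?_⟩
  induction n with
  | zero => simp
  | succ n ih =>
    have h := congrFun hy n
    rw [shiftOp_sub_apply, Pi.zero_apply, sub_eq_zero] at h
    rw [h, ih]
    simp only [Pi.smul_apply, smul_eq_mul]
    ring

/-- Conjugated by `f ↦ (n ↦ c ^ n * f n)`, the operator `S - c` is `c` times the forward
difference. -/
lemma shiftOp_sub_pow_apply (c : ℂ) (k : ℕ) (f : ℂ → ℂ) :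
    ((shiftOp - c • (1 : Module.End ℂ (ℕ → ℂ))) ^ k) (fun n : ℕ => c ^ n * f n) =
      fun n : ℕ => c ^ (n + k) * ((fwdDiff (1 : ℂ))^[k] f) n := by
  induction k with
  | zero => simp
  | succ k ih =>
    rw [pow_succ', mul_apply, ih]
    funext n
    rw [shiftOp_sub_apply, Function.iterate_succ_apply', fwdDiff]
    push_cast
    ring

lemma genEigenspace_shiftOp {c : ℂ} (hc : c ≠ 0) (l : ℕ) :
    shiftOp.genEigenspace c l = G c l := by
  rw [genEigenspace_nat]
  apply le_antisymm
  · refine ker_pow_le _ _ _ (ker_shiftOp_sub c) l fun j hj => ?_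
    refine ⟨fun n => c ^ n * (n : ℂ) ^ j, ⟨Polynomial.X ^ j, ?_, ?_⟩, ?_, ?_⟩
    · rw [SetLike.mem_coe, Polynomial.mem_degreeLT, Polynomial.degree_X_pow]
      exact_mod_cast hj
    · funext n
      simp [seqOfPoly]
    · rw [shiftOp_sub_pow_apply c j (fun r => r ^ j), fwdDiff_iter_eq_factorial]
      intro h
      have h0 := congrFun h 0
      simp [hc, Nat.factorial_ne_zero] at h0
    · rw [shiftOp_sub_pow_apply c (j + 1) (fun r => r ^ j),
        fwdDiff_iter_pow_eq_zero_of_lt (Nat.lt_succ_self j)]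
      funext n
      simp
  · rintro _ ⟨p, hp, rfl⟩
    rw [SetLike.mem_coe, Polynomial.mem_degreeLT] at hp
    -- `natDegree 0 = 0` is not below `l = 0`, so the zero polynomial is treated apart.
    by_cases hp0 : p = 0
    · rw [hp0, map_zero]
      exact Submodule.zero_mem _
    · change ((shiftOp - c • (1 : Module.End ℂ (ℕ → ℂ))) ^ l)
        (fun n : ℕ => c ^ n * p.eval (n : ℂ)) = 0
      rw [shiftOp_sub_pow_apply c l (fun r => p.eval r), Polynomial.fwdDiff_iter_eq_zero_of_degree_lt
        ((Polynomial.natDegree_lt_iff_degree_lt hp0).2 hp)]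
      funext n
      simp

lemma shiftOp_sub_pow_mem {V : Submodule ℂ (ℕ → ℂ)} (hinv : ∀ y ∈ V, shiftOp y ∈ V) (c : ℂ)
    (k : ℕ) {y : ℕ → ℂ} (hy : y ∈ V) :
    ((shiftOp - c • (1 : Module.End ℂ (ℕ → ℂ))) ^ k) y ∈ V := by
  induction k with
  | zero => simpa using hy
  | succ k ih =>
    rw [pow_succ', mul_apply]
    exact V.sub_mem (hinv _ ih) (V.smul_mem c ih)

/-- The part of `V` in a generalized eigenspace of the shift is a full `ker (S - c) ^ l`. -/
lemma exists_inf_maxGenEigenspace_eq (V : Submodule ℂ (ℕ → ℂ)) (hfin : FiniteDimensional ℂ V)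
    (hinv : ∀ y ∈ V, shiftOp y ∈ V) (c : ℂ) :
    ∃ l : ℕ, V ⊓ shiftOp.maxGenEigenspace c = shiftOp.genEigenspace c l := by
  classical
  have hex : ∃ l : ℕ, V ⊓ shiftOp.maxGenEigenspace c ≤ shiftOp.genEigenspace c l := by
    refine ⟨Module.finrank ℂ V, ?_⟩
    have h := maxGenEigenspace_eq_genEigenspace_finrank (LinearMap.restrict shiftOp hinv) c
    rw [maxGenEigenspace, Submodule.inf_genEigenspace shiftOp V hinv, ← maxGenEigenspace, h,
      ← Submodule.inf_genEigenspace shiftOp V hinv]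
    exact inf_le_right
  refine ⟨Nat.find hex, le_antisymm (Nat.find_spec hex) (le_inf ?_ ?_)⟩
  · have hspec := Nat.find_spec hex
    have hmin : ∀ m < Nat.find hex, _ := fun m hm => Nat.find_min hex hm
    generalize Nat.find hex = l at hspec hmin
    rw [genEigenspace_nat]
    refine ker_pow_le _ _ _ (ker_shiftOp_sub c) l fun j hj => ?_
    obtain ⟨w, hw, hw0⟩ := SetLike.not_le_iff_exists.1 (hmin (l - 1) (by omega))
    have hwl := hspec hw
    rw [mem_genEigenspace_nat, LinearMap.mem_ker] at hw0 hwl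
    refine ⟨_, shiftOp_sub_pow_mem hinv c (l - 1 - j) hw.1, ?_, ?_⟩
    · rwa [← mul_apply, ← pow_add, show j + (l - 1 - j) = l - 1 by omega]
    · rwa [← mul_apply, ← pow_add, show j + 1 + (l - 1 - j) = l by omega]
  · exact (shiftOp.genEigenspace c).monotone le_top

lemma inf_maxGenEigenspace_zero (V : Submodule ℂ (ℕ → ℂ)) (hinv : ∀ y ∈ V, shiftOp y ∈ V)
    (hinj : Function.Injective fun y : V => shiftOp (y : ℕ → ℂ)) :
    V ⊓ shiftOp.maxGenEigenspace 0 = ⊥ := by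
  rw [eq_bot_iff]
  rintro y ⟨hy, hy0⟩
  obtain ⟨k, hk⟩ := (mem_maxGenEigenspace _ _ _).1 hy0
  rw [zero_smul, sub_zero] at hk
  rw [Submodule.mem_bot]
  induction k generalizing y with
  | zero => simpa using hk
  | succ k ih =>
    rw [pow_succ, mul_apply] at hk
    have h := ih (hinv y hy) ((mem_maxGenEigenspace _ _ _).2 ⟨k, by simpa using hk⟩) hk
    have hy_eq := @hinj ⟨y, hy⟩ 0 (by simpa using h)
    simpa using hy_eq

/-- A finite-dimensional shift-invariant subspace of complex sequences on which the shift is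
injective is the internal direct sum of spaces of arithmetic-geometric sequences. -/
theorem stmt_0 (V : Submodule ℂ (ℕ → ℂ)) (hfin : FiniteDimensional ℂ V)
    (hinv : ∀ y ∈ V, shiftOp y ∈ V)
    (hinj : Function.Injective fun y : V => shiftOp (y : ℕ → ℂ)) :
    ∃ (s : ℕ) (c : Fin s → ℂ) (l : Fin s → ℕ),
      Function.Injective c ∧ (∀ i, c i ≠ 0) ∧ (∀ i, 0 < l i) ∧
      (∀ y : Fin s → (ℕ → ℂ), (∀ i, y i ∈ G (c i) (l i)) → ∑ i, y i = 0 → ∀ i, y i = 0) ∧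
      (⨆ i, G (c i) (l i)) = V := by
  let T : Module.End ℂ V := LinearMap.restrict shiftOp hinv
  have hT : ∀ c, V ⊓ shiftOp.maxGenEigenspace c = (T.maxGenEigenspace c).map V.subtype :=
    fun c => Submodule.inf_genEigenspace shiftOp V hinv
  have hfinite : {c | T.maxGenEigenspace c ≠ ⊥}.Finite :=
    WellFoundedGT.finite_ne_bot_of_iSupIndep T.independent_maxGenEigenspace
  choose L hL using exists_inf_maxGenEigenspace_eq V hfin hinv
  obtain ⟨s, c, hcinj, hcrange⟩ := hfinite.fin_param
  have hne : ∀ i, V ⊓ shiftOp.maxGenEigenspace (c i) ≠ ⊥ := by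
    intro i
    have hi : c i ∈ {c | T.maxGenEigenspace c ≠ ⊥} := hcrange ▸ Set.mem_range_self i
    rw [hT, Ne, (Submodule.map_injective_of_injective V.injective_subtype).eq_iff'
      (Submodule.map_bot _)]
    exact hi
  have hc0 : ∀ i, c i ≠ 0 := fun i h =>
    hne i (h ▸ inf_maxGenEigenspace_zero V hinv hinj)
  have hG : ∀ i, G (c i) (L (c i)) = V ⊓ shiftOp.maxGenEigenspace (c i) := fun i => by
    rw [hL, genEigenspace_shiftOp (hc0 i)]
  refine ⟨s, c, fun i => L (c i), hcinj, hc0, fun i => ?_, fun y hy hsum i => ?_, ?_⟩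
  · rw [Nat.pos_iff_ne_zero]
    intro h0
    apply hne i
    rw [hL, show L (c i) = 0 from h0]
    simp
  · have hind := (shiftOp.independent_maxGenEigenspace).comp hcinj
    rw [iSupIndep_iff_finsetSum_eq_zero_imp_eq_zero] at hind
    refine hind Finset.univ y (fun i _ => ?_) hsum i (Finset.mem_univ i)
    have := hy i
    rw [hG] at this
    exact this.2
  · simp_rw [hG, hT]
    rw [← Submodule.map_iSup]
    have htop : ⨆ i, T.maxGenEigenspace (c i) = ⊤ := by
      rw [eq_top_iff, ← iSup_maxGenEigenspace_eq_top T]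
      refine iSup_le fun μ => ?_
      by_cases hμ : T.maxGenEigenspace μ = ⊥
      · rw [hμ]
        exact bot_le
      · obtain ⟨i, rfl⟩ : μ ∈ Set.range c := hcrange ▸ hμ
        exact le_iSup (fun i => T.maxGenEigenspace (c i)) i
    rw [htop, Submodule.map_top, Submodule.range_subtype]
end

section
/- Let V be a finite-dimensional subspace of the space of infinitely differentiable functions from ℝ to ℂ such that V is invariant under differentiation (i.e., for every y ∈ V, the derivative y′ belongs to V). Then there exist finitely many distinct complex numbers λ₁, …, λ_s and positive integers l₁, …, l_s such that V is the internal direct sum of the subspaces H_{λ₁,l₁}, …, H_{λ_s,l_s}. -/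
/-!
The derivative restricts to an endomorphism `D` of `V`. As `ℂ` is algebraically closed, `V` is the
internal direct sum of the maximal generalized eigenspaces of `D`, only finitely many of which are
nonzero, so it suffices that each of them equals `H c m` for some `m` (`exists_H_eq`).

The operator `D - c` sends `exp (c t) * p t` to `exp (c t) * p' t`, so the functions of `V` of this
form are generalized eigenvectors. Conversely, integrating `(D - c) ^ k y = 0` one step at a time
(`mem_range_of_deriv_sub`) shows that every generalized eigenvector has this form. The polynomials
`p` with `exp (c t) * p t` in `V` thus form a finite-dimensional space closed under `p ↦ p'`, and
the only such spaces are those of all polynomials of degree `< m` (`exists_eq_degreeLT`): the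
successive derivatives of an element of degree `n` have degrees `n, n - 1, …, 0`.
-/

open Polynomial

/-- The linear map sending a polynomial `p` to the function `t ↦ exp (c t) * p t`. -/
noncomputable def funOfPoly (c : ℂ) : Polynomial ℂ →ₗ[ℂ] (ℝ → ℂ) where
  toFun p := fun t => Complex.exp (c * t) * p.eval (t : ℂ)
  map_add' p q := by funext t; simp [mul_add]
  map_smul' a p := by funext t; simp; ring

/-- `H c m` is the space of functions `t ↦ exp (c t) * p t` with `p` a polynomial of degree `< m`. -/
noncomputable def H (c : ℂ) (m : ℕ) : Submodule ℂ (ℝ → ℂ) :=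
  (Polynomial.degreeLT ℂ m).map (funOfPoly c)

theorem funOfPoly_apply (c : ℂ) (p : ℂ[X]) (t : ℝ) :
    funOfPoly c p t = Complex.exp (c * t) * p.eval (t : ℂ) := rfl

theorem funOfPoly_injective (c : ℂ) : Function.Injective (funOfPoly c) := by
  rw [injective_iff_map_eq_zero]
  intro p hp
  refine Polynomial.eq_zero_of_infinite_isRoot p
    ((Set.infinite_range_of_injective Complex.ofReal_injective).mono ?_)
  rintro _ ⟨t, rfl⟩
  have h := congrFun hp t
  rw [funOfPoly_apply] at h
  exact (mul_eq_zero.1 h).resolve_left (Complex.exp_ne_zero _)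

theorem hasDerivAt_cexp_ofReal (c : ℂ) (t : ℝ) :
    HasDerivAt (fun t : ℝ => Complex.exp (c * t)) (Complex.exp (c * t) * c) t := by
  have h : HasDerivAt (fun t : ℝ => c * (t : ℂ)) c t := by
    simpa using (Complex.ofRealCLM.hasDerivAt (x := t)).const_mul c
  exact h.cexp

theorem hasDerivAt_funOfPoly (c : ℂ) (p : ℂ[X]) (t : ℝ) :
    HasDerivAt (funOfPoly c p) (c * funOfPoly c p t + funOfPoly c (derivative p) t) t := by
  have h := (hasDerivAt_cexp_ofReal c t).mul (p.hasDerivAt (t : ℂ)).comp_ofReal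
  refine h.congr_deriv ?_
  simp only [funOfPoly_apply]
  ring

theorem deriv_funOfPoly (c : ℂ) (p : ℂ[X]) :
    deriv (funOfPoly c p) = c • funOfPoly c p + funOfPoly c (derivative p) := by
  funext t
  simpa using (hasDerivAt_funOfPoly c p t).deriv

theorem exists_derivative_eq (p : ℂ[X]) : ∃ q : ℂ[X], derivative q = p := by
  induction p using Polynomial.induction_on' with
  | add p q hp hq =>
    obtain ⟨a, rfl⟩ := hp
    obtain ⟨b, rfl⟩ := hq
    exact ⟨a + b, by simp⟩
  | monomial n a =>
    refine ⟨monomial (n + 1) (a / (n + 1)), ?_⟩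
    have h : (n : ℂ) + 1 ≠ 0 := by exact_mod_cast n.succ_ne_zero
    rw [derivative_monomial]
    simp [h]

/-- Variation of constants: solutions of `y' - c y = exp (c t) * p t` are again of the form
`exp (c t) * q t`. -/
theorem mem_range_of_deriv_sub (c : ℂ) (y : ℝ → ℂ) (hy : Differentiable ℝ y)
    (h : deriv y - c • y ∈ LinearMap.range (funOfPoly c)) :
    y ∈ LinearMap.range (funOfPoly c) := by
  obtain ⟨p, hp⟩ := h
  obtain ⟨q, rfl⟩ := exists_derivative_eq p
  -- `exp (-c t) * y t - q t` has zero derivative, hence is constant.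
  have hd : ∀ t : ℝ, HasDerivAt
      (fun t : ℝ => Complex.exp (-c * t) * y t - q.eval (t : ℂ)) 0 t := by
    intro t
    have h1 := ((hasDerivAt_cexp_ofReal (-c) t).mul (hy t).hasDerivAt).sub
      (q.hasDerivAt (t : ℂ)).comp_ofReal
    refine h1.congr_deriv ?_
    have h2 : Complex.exp (c * t) * (derivative q).eval (t : ℂ) = deriv y t - c * y t :=
      congrFun hp t
    have h3 : Complex.exp (-c * t) * Complex.exp (c * t) = 1 := by
      rw [← Complex.exp_add]; simp
    linear_combination (-Complex.exp (-c * t)) * h2 + (derivative q).eval (t : ℂ) * h3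
  have hconst := is_const_of_deriv_eq_zero (fun t => (hd t).differentiableAt)
    (fun t => (hd t).deriv)
  refine ⟨q + C (Complex.exp (-c * (0 : ℝ)) * y 0 - q.eval ((0 : ℝ) : ℂ)), ?_⟩
  funext t
  have h3 : Complex.exp (-c * t) * Complex.exp (c * t) = 1 := by
    rw [← Complex.exp_add]; simp
  rw [funOfPoly_apply, eval_add, eval_C, ← hconst t 0]
  linear_combination y t * h3

theorem degreeLT_zero_eq_bot : degreeLT ℂ 0 = ⊥ := by
  rw [eq_bot_iff]
  intro q hq
  rw [mem_degreeLT, degree_lt_iff_coeff_zero] at hq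
  rw [Submodule.mem_bot]
  ext k
  simpa using hq k (Nat.zero_le k)

/-- The successive derivatives of `p` lie in `P` and have degrees `n, n - 1, …, 0`, so they span
all polynomials of degree `≤ n`. -/
theorem degreeLT_le_of_mem (P : Submodule ℂ ℂ[X]) (hP : ∀ p ∈ P, derivative p ∈ P) (n : ℕ) :
    ∀ p ∈ P, p ≠ 0 → p.natDegree = n → degreeLT ℂ (n + 1) ≤ P := by
  -- Eliminating the leading coefficient of `q` with a multiple of `p` leaves degree `< n`.
  have key : ∀ n : ℕ, ∀ p ∈ P, p ≠ 0 → p.natDegree = n → degreeLT ℂ n ≤ P →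
      degreeLT ℂ (n + 1) ≤ P := by
    intro n p hp hp0 hn hle q hq
    have hlc : p.coeff n ≠ 0 := by rw [← hn]; exact leadingCoeff_ne_zero.2 hp0
    have h : q - (q.coeff n / p.coeff n) • p ∈ P := by
      apply hle
      rw [mem_degreeLT, degree_lt_iff_coeff_zero] at hq ⊢
      intro k hk
      rcases hk.eq_or_lt with rfl | hk
      · simp [hlc]
      · have hpk : p.coeff k = 0 := coeff_eq_zero_of_natDegree_lt (by omega)
        simp [hq k hk, hpk]
    simpa using P.add_mem h (P.smul_mem (q.coeff n / p.coeff n) hp)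
  induction n with
  | zero =>
    intro p hp hp0 hn
    exact key 0 p hp hp0 hn (by simp [degreeLT_zero_eq_bot])
  | succ n ih =>
    intro p hp hp0 hn
    refine key (n + 1) p hp hp0 hn (ih _ (hP p hp) ?_ ?_)
    · intro h0
      have := derivative_eq_zero.1 h0
      omega
    · rw [natDegree_derivative, hn]; rfl

theorem exists_eq_degreeLT (P : Submodule ℂ ℂ[X]) [FiniteDimensional ℂ P]
    (hP : ∀ p ∈ P, derivative p ∈ P) : ∃ m, P = degreeLT ℂ m := by
  classical
  have hbound : ∀ m, degreeLT ℂ m ≤ P → m ≤ Module.finrank ℂ P := by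
    intro m hm
    have h := Submodule.finrank_mono hm
    rwa [(degreeLTEquiv ℂ m).finrank_eq, Module.finrank_fin_fun] at h
  have h0 : degreeLT ℂ 0 ≤ P := by simp [degreeLT_zero_eq_bot]
  refine ⟨Nat.findGreatest (fun m => degreeLT ℂ m ≤ P) (Module.finrank ℂ P), le_antisymm ?_ ?_⟩
  · intro p hp
    by_cases hp0 : p = 0
    · simp [hp0]
    · have hle := degreeLT_le_of_mem P hP _ p hp hp0 rfl
      have h1 := Nat.le_findGreatest (P := fun m => degreeLT ℂ m ≤ P) (hbound _ hle) hle
      apply degreeLT_mono h1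
      rw [mem_degreeLT, degree_eq_natDegree hp0]
      exact_mod_cast Nat.lt_succ_self _
  · exact Nat.findGreatest_spec (P := fun m => degreeLT ℂ m ≤ P) (Nat.zero_le _) h0

/-- Every maximal generalized eigenspace of differentiation on `V` is some `H c m`; it is `H c 0`
when `c` is not an eigenvalue. -/
theorem exists_H_eq (V : Submodule ℂ (ℝ → ℂ)) [FiniteDimensional ℂ V]
    (hdiff : ∀ y ∈ V, Differentiable ℝ y) (D : Module.End ℂ V)
    (hD : ∀ y : V, (D y : ℝ → ℂ) = deriv (y : ℝ → ℂ)) (c : ℂ) :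
    ∃ m, H c m = (D.maxGenEigenspace c).map V.subtype := by
  have hN : ∀ y : V, ((D - c • (1 : Module.End ℂ V)) y : ℝ → ℂ)
      = deriv (y : ℝ → ℂ) - c • (y : ℝ → ℂ) := by
    intro y
    simp [hD]
  have hPder : ∀ p ∈ V.comap (funOfPoly c), derivative p ∈ V.comap (funOfPoly c) := by
    intro p hp
    have h := ((D - c • (1 : Module.End ℂ V)) ⟨funOfPoly c p, hp⟩).2
    rw [hN] at h
    simpa [deriv_funOfPoly] using h
  have : FiniteDimensional ℂ (V.comap (funOfPoly c)) :=
    Module.Finite.of_injective ((funOfPoly c).submoduleComap V) (by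
      intro p q hpq
      exact Subtype.ext (funOfPoly_injective c (congrArg Subtype.val hpq)))
  obtain ⟨m, hm⟩ := exists_eq_degreeLT _ hPder
  refine ⟨m, ?_⟩
  rw [H, ← hm]
  apply le_antisymm
  · rintro _ ⟨p, hp, rfl⟩
    refine ⟨⟨funOfPoly c p, hp⟩, ?_, rfl⟩
    rw [SetLike.mem_coe, Module.End.mem_maxGenEigenspace]
    have hiter : ∀ k : ℕ, (((D - c • (1 : Module.End ℂ V)) ^ k) ⟨funOfPoly c p, hp⟩ : ℝ → ℂ)
        = funOfPoly c (derivative^[k] p) := by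
      intro k
      induction k with
      | zero => rfl
      | succ k ih =>
        rw [pow_succ', Module.End.mul_apply, hN, ih, deriv_funOfPoly,
          Function.iterate_succ_apply']
        simp
    refine ⟨p.natDegree + 1, Subtype.ext ?_⟩
    rw [hiter, iterate_derivative_eq_zero (Nat.lt_succ_self _)]
    simp
  · rintro _ ⟨y, hy, rfl⟩
    rw [SetLike.mem_coe, Module.End.mem_maxGenEigenspace] at hy
    obtain ⟨k, hk⟩ := hy
    have hrange : ∀ k : ℕ, ∀ y : V, ((D - c • (1 : Module.End ℂ V)) ^ k) y = 0 →
        (y : ℝ → ℂ) ∈ LinearMap.range (funOfPoly c) := by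
      intro k
      induction k with
      | zero =>
        intro y hy
        have hy0 : y = 0 := hy
        simp [hy0]
      | succ k ih =>
        intro y hy
        rw [pow_succ, Module.End.mul_apply] at hy
        apply mem_range_of_deriv_sub c _ (hdiff _ y.2)
        rw [← hN]
        exact ih _ hy
    obtain ⟨p, hp⟩ := hrange k y hk
    refine ⟨p, ?_, hp⟩
    rw [SetLike.mem_coe, Submodule.mem_comap, hp]
    exact y.2

/-- A finite-dimensional subspace of smooth functions invariant under differentiation is the
internal direct sum of polynomial-exponential spaces. -/
theorem stmt_2 (V : Submodule ℂ (ℝ → ℂ)) (hfin : FiniteDimensional ℂ V)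
    (hsmooth : ∀ y ∈ V, ContDiff ℝ (⊤ : ℕ∞) y)
    (hinv : ∀ y ∈ V, deriv y ∈ V) :
    ∃ (s : ℕ) (c : Fin s → ℂ) (l : Fin s → ℕ),
      Function.Injective c ∧ (∀ i, 0 < l i) ∧
      (∀ y : Fin s → (ℝ → ℂ), (∀ i, y i ∈ H (c i) (l i)) → ∑ i, y i = 0 → ∀ i, y i = 0) ∧
      (⨆ i, H (c i) (l i)) = V := by
  have hdiff : ∀ y ∈ V, Differentiable ℝ y := fun y hy => (hsmooth y hy).differentiable (by simp)
  let D : Module.End ℂ V :=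
    { toFun := fun y => ⟨deriv (y : ℝ → ℂ), hinv _ y.2⟩
      map_add' := fun y z => by
        apply Subtype.ext
        funext t
        exact deriv_add (hdiff _ y.2 t) (hdiff _ z.2 t)
      map_smul' := fun a y => by
        apply Subtype.ext
        funext t
        exact deriv_const_smul a (hdiff _ y.2 t) }
  choose m hm using exists_H_eq V hdiff D (fun _ => rfl)
  have hind := D.independent_maxGenEigenspace
  have hfinite : {c | D.maxGenEigenspace c ≠ ⊥}.Finite :=
    WellFoundedGT.finite_ne_bot_of_iSupIndep hind
  have := hfinite.fintype
  let e := (Fintype.equivFin {c | D.maxGenEigenspace c ≠ ⊥}).symm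
  have hinj : Function.Injective (fun i => (e i : ℂ)) :=
    Subtype.val_injective.comp e.injective
  refine ⟨_, fun i => e i, fun i => m (e i), hinj, ?_, ?_, ?_⟩
  · intro i
    rw [Nat.pos_iff_ne_zero]
    intro h0
    apply (e i).2
    have h := hm (e i)
    have hbot : H (e i) 0 = ⊥ := by rw [H, degreeLT_zero_eq_bot, Submodule.map_bot]
    rw [show m (e i) = 0 from h0, hbot] at h
    exact Submodule.map_injective_of_injective V.injective_subtype
      (h.symm.trans (Submodule.map_bot _).symm)
  · intro y hy hsum
    have hy' : ∀ i, ∃ z : V, z ∈ D.maxGenEigenspace (e i) ∧ (z : ℝ → ℂ) = y i := by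
      intro i
      have h := hy i
      rw [hm] at h
      exact h
    choose z hz hzy using hy'
    have h0 := (iSupIndep_iff_finsetSum_eq_zero_imp_eq_zero _).1 (hind.comp hinj)
      Finset.univ z (fun i _ => hz i) (by
        apply Subtype.ext
        simpa [hzy] using hsum)
    intro i
    rw [← hzy, h0 i (Finset.mem_univ i)]
    rfl
  · have htop : (⨆ i, D.maxGenEigenspace (e i)) = ⊤ := by
      rw [eq_top_iff, ← D.iSup_maxGenEigenspace_eq_top]
      refine iSup_le fun c => ?_
      by_cases hc : D.maxGenEigenspace c = ⊥
      · simp [hc]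
      · have h := le_iSup (fun i => D.maxGenEigenspace (e i)) (e.symm ⟨c, hc⟩)
        simpa using h
    simp_rw [hm]
    rw [← Submodule.map_iSup, htop, Submodule.map_subtype_top]
end

section
/- Let λ be a nonzero complex number and let k ≤ r be nonnegative integers. Then the sequence obtained by applying (S − λ id)^k to the sequence n ↦ n^r · λ^n has the form n ↦ q(n) · λ^n for some polynomial q with complex coefficients of degree exactly r − k. -/
open Polynomial

/-!
On sequences of the form `n ↦ p n * c ^ n`, the operator `S - c` acts by replacing `p` with
`c * (p (X + 1) - p)`. For `c ≠ 0` this lowers the degree by exactly one as long as `p` has positive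
degree (`degree_taylor_sub`), so `k ≤ r` applications to `X ^ r` leave degree `r - k`.
-/

/-- The forward difference lowers a positive degree by exactly one: the top coefficients cancel,
and the next one is `(m + 1)` times the leading coefficient of `p`. -/
lemma degree_taylor_sub (p : ℂ[X]) (m : ℕ) (hp : p.degree = ((m + 1 : ℕ) : WithBot ℕ)) :
    (taylor 1 p - p).degree = (m : WithBot ℕ) := by
  have hnat : p.natDegree = m + 1 := natDegree_eq_of_degree_eq_some hp
  have hp0 : p ≠ 0 := by
    rintro rfl
    simp at hnat
  have hlt : (taylor 1 p - p).degree < ((m + 1 : ℕ) : WithBot ℕ) := by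
    have h := degree_sub_lt_left (degree_taylor p 1) (by simpa using hp0) (leadingCoeff_taylor 1 p)
    rwa [degree_taylor, hp] at h
  have hcoeff : (taylor 1 p - p).coeff m = (m + 1) * p.coeff (m + 1) := by
    have hd : (hasseDeriv m p).natDegree < 2 := by
      have := natDegree_hasseDeriv_le p m
      omega
    rw [coeff_sub, taylor_coeff, eval_eq_sum_range' hd]
    simp [Finset.sum_range_succ, hasseDeriv_coeff, add_comm 1 m]
  have hlead : p.coeff (m + 1) ≠ 0 := by
    rw [← hnat]
    exact leadingCoeff_ne_zero.mpr hp0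
  refine le_antisymm ?_ (le_degree_of_ne_zero ?_)
  · rw [degree_lt_iff_coeff_zero] at hlt
    exact (degree_le_iff_coeff_zero _ _).mpr fun j hj => hlt j (by exact_mod_cast hj)
  · rw [hcoeff]
    exact mul_ne_zero (by exact_mod_cast Nat.succ_ne_zero m) hlead

/-- For `k ≤ r`, applying `(S - c • 1) ^ k` to `n ↦ n ^ r * c ^ n` gives `n ↦ q n * c ^ n`
for some polynomial `q` of degree exactly `r - k`. -/
theorem stmt_7 (c : ℂ) (hc : c ≠ 0) (k r : ℕ) (hkr : k ≤ r) :
    ∃ q : Polynomial ℂ, q.degree = ((r - k : ℕ) : WithBot ℕ) ∧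
      (fun y : ℕ → ℂ => fun n => y (n + 1) - c * y n)^[k] (fun n => (n : ℂ) ^ r * c ^ n) =
        fun n : ℕ => q.eval (n : ℂ) * c ^ n := by
  induction k with
  | zero => exact ⟨X ^ r, by simp, by simp⟩
  | succ k ih =>
    obtain ⟨q, hq, hy⟩ := ih (by omega)
    refine ⟨C c * (taylor 1 q - q), ?_, ?_⟩
    · rw [degree_C_mul hc]
      apply degree_taylor_sub
      rw [hq, show r - k = r - (k + 1) + 1 by omega]
    · rw [Function.iterate_succ_apply', hy]
      funext n
      simp only [eval_mul, eval_C, eval_sub, taylor_eval, Nat.cast_add, Nat.cast_one, pow_succ]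
      ring
end

section
/- Let λ be a nonzero complex number and let k > r be nonnegative integers. Then applying (S − λ id)^k to the sequence n ↦ n^r · λ^n yields the zero sequence. -/
open Polynomial

/-- Conjugation by `n ↦ c ^ n` turns `S - c • 1` into `c` times the forward difference. -/
lemma shift_sub_iterate (c : ℂ) (f : ℂ → ℂ) (k : ℕ) :
    (fun y : ℕ → ℂ => fun n => y (n + 1) - c * y n)^[k] (fun n => f n * c ^ n) =
      fun n : ℕ => (fwdDiff (1 : ℂ))^[k] f n * c ^ (n + k) := by
  induction k with
  | zero => rfl
  | succ k ih =>
    rw [Function.iterate_succ_apply', ih]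
    funext n
    rw [Function.iterate_succ_apply', fwdDiff]
    push_cast
    ring

/-- For `k > r`, applying `(S - c • 1) ^ k` to `n ↦ n ^ r * c ^ n` gives the zero sequence. -/
theorem stmt_8 (c : ℂ) (hc : c ≠ 0) (k r : ℕ) (hkr : r < k) :
    (fun y : ℕ → ℂ => fun n => y (n + 1) - c * y n)^[k] (fun n => (n : ℂ) ^ r * c ^ n) = 0 := by
  -- The `k`-th forward difference of `x ↦ x ^ r` vanishes, since each difference lowers the degree.
  rw [shift_sub_iterate c (fun x => x ^ r) k, fwdDiff_iter_pow_eq_zero_of_lt hkr]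
  funext n
  simp
end

section
/- Let λ be a complex number and let k ≤ r be nonnegative integers. Define the operator L on infinitely differentiable functions ℝ → ℂ by (L f)(t) = f′(t) − λ · f(t). Then the k-fold iterate L^k applied to the function t ↦ t^r · exp(λt) equals t ↦ q(t) · exp(λt) for some polynomial q with complex coefficients of degree exactly r − k. -/
/-!
The operator `L f = f' - c f` is differentiation conjugated by `exp (c t)`: it sends
`p(t) exp (c t)` to `p'(t) exp (c t)` (`deriv_sub_mul_eval_mul_exp`). Hence each application of `L`
differentiates the polynomial factor, which in characteristic zero lowers a positive degree by
exactly one.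
-/

lemma deriv_sub_mul_eval_mul_exp (c : ℂ) (p : Polynomial ℂ) (t : ℝ) :
    deriv (fun t : ℝ => p.eval (t : ℂ) * Complex.exp (c * t)) t
        - c * (p.eval (t : ℂ) * Complex.exp (c * t)) =
      p.derivative.eval (t : ℂ) * Complex.exp (c * t) := by
  have hexp : HasDerivAt (fun z : ℂ => Complex.exp (c * z)) (Complex.exp (c * t) * c) (t : ℂ) := by
    simpa using ((hasDerivAt_id (t : ℂ)).const_mul c).cexp
  have h := ((p.hasDerivAt (t : ℂ)).mul hexp).comp_ofReal
  have h' : deriv (fun t : ℝ => p.eval (t : ℂ) * Complex.exp (c * t)) t = _ := h.deriv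
  rw [h']
  ring

open Polynomial

/-- For `k ≤ r`, applying the `k`-fold iterate of `L f = f' - c • f` to `t ↦ t ^ r * exp (c t)`
gives `t ↦ q t * exp (c t)` for some polynomial `q` of degree exactly `r - k`. -/
theorem stmt_9 (c : ℂ) (k r : ℕ) (hkr : k ≤ r) :
    ∃ q : Polynomial ℂ, q.degree = ((r - k : ℕ) : WithBot ℕ) ∧
      (fun f : ℝ → ℂ => fun t => deriv f t - c * f t)^[k]
          (fun t : ℝ => (t : ℂ) ^ r * Complex.exp (c * t)) =
        fun t : ℝ => q.eval (t : ℂ) * Complex.exp (c * t) := by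
  induction k with
  | zero => exact ⟨X ^ r, by simp, by simp⟩
  | succ k ih =>
    obtain ⟨q, hdeg, hq⟩ := ih (by omega)
    have hnat : q.natDegree = r - k := natDegree_eq_of_degree_eq_some hdeg
    refine ⟨q.derivative, ?_, ?_⟩
    · rw [degree_derivative (by omega), hnat, Nat.sub_sub]
    · rw [Function.iterate_succ_apply', hq]
      funext t
      exact deriv_sub_mul_eval_mul_exp c q t
end

section
/- Let V be a subspace of the space of complex sequences that is invariant under the shift operator S, let λ be a nonzero complex number, let l be a positive integer, and suppose V contains a sequence of the form n ↦ p(n) · λ^n where p is a polynomial with complex coefficients of degree exactly l − 1. Then G_{λ,l} ⊆ V. -/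
/-!
Through `seqOfPoly c`, the subspace `V` pulls back to a space `W` of polynomials. As `c ≠ 0`, shift
invariance of `V` makes `W` stable under `p(X) ↦ p(X + 1)`, hence under the forward difference
`p(X) ↦ p(X + 1) - p(X)`. The difference lowers the degree of a nonconstant polynomial by exactly
one, so a single element of degree `d` in `W` yields elements of every degree `≤ d`
(`mem_of_taylor_stable`), and these span all polynomials of degree `≤ d`.
-/

open Polynomial

/-- For `p` of degree at most `k + 1`, the coefficient of `X ^ k` in the forward difference comes
only from the `X ^ (k + 1)` term of `p`. -/
lemma coeff_taylor_one_sub (k : ℕ) (p : Polynomial ℂ) (hp : p.natDegree ≤ k + 1) :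
    (taylor 1 p - p).coeff k = (k + 1) * p.coeff (k + 1) := by
  have h : (hasseDeriv k p).natDegree < 2 := by
    have := natDegree_hasseDeriv_le p k
    omega
  rw [coeff_sub, taylor_coeff, eval_eq_sum_range' h]
  simp [Finset.sum_range_succ, hasseDeriv_coeff, add_comm 1 k]

lemma natDegree_taylor_one_sub_le (k : ℕ) (p : Polynomial ℂ) (hp : p.natDegree = k + 1) :
    (taylor 1 p - p).natDegree ≤ k := by
  rw [natDegree_le_iff_coeff_eq_zero]
  intro N hN
  rcases (Nat.succ_le_of_lt hN).eq_or_lt with h | h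
  · have h' : N = p.natDegree := by omega
    rw [coeff_sub, h', coeff_taylor_natDegree, leadingCoeff, sub_self]
  · rw [coeff_sub, coeff_eq_zero_of_natDegree_lt, coeff_eq_zero_of_natDegree_lt, sub_self]
    · omega
    · rw [natDegree_taylor]; omega

/-- A space of polynomials stable under `X ↦ X + 1` that contains a polynomial of degree exactly
`d` contains every polynomial of degree at most `d`. -/
lemma mem_of_taylor_stable (W : Submodule ℂ (Polynomial ℂ)) (hW : ∀ p ∈ W, taylor 1 p ∈ W)
    (d : ℕ) : ∀ p ∈ W, p.natDegree ≤ d → p.coeff d ≠ 0 → ∀ q : Polynomial ℂ,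
      q.natDegree ≤ d → q ∈ W := by
  induction d with
  | zero =>
    intro p hp hd h0 q hq
    rw [eq_C_of_natDegree_le_zero hd] at hp
    have h := W.smul_mem (q.coeff 0 / p.coeff 0) hp
    rwa [smul_C, smul_eq_mul, div_mul_cancel₀ _ h0, ← eq_C_of_natDegree_le_zero hq] at h
  | succ k ih =>
    intro p hp hd h0 q hq
    have hdeg : p.natDegree = k + 1 := le_antisymm hd (le_natDegree_of_ne_zero h0)
    have hlow := ih (taylor 1 p - p) (W.sub_mem (hW p hp) hp)
      (natDegree_taylor_one_sub_le k p hdeg)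
      (by
        rw [coeff_taylor_one_sub k p hd]
        exact mul_ne_zero (Nat.cast_add_one_ne_zero k) h0)
    -- Cancelling the top coefficient of `q` with a multiple of `p` lowers the degree.
    have hr : q - (q.coeff (k + 1) / p.coeff (k + 1)) • p ∈ W := by
      apply hlow
      rw [natDegree_le_iff_coeff_eq_zero]
      intro N hN
      rcases (Nat.succ_le_of_lt hN).eq_or_lt with h | h
      · rw [← h, coeff_sub, coeff_smul, smul_eq_mul, Nat.succ_eq_add_one,
          div_mul_cancel₀ _ h0, sub_self]
      · rw [coeff_sub, coeff_smul, coeff_eq_zero_of_natDegree_lt (hq.trans_lt h),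
          coeff_eq_zero_of_natDegree_lt (hd.trans_lt h), smul_zero, sub_zero]
    have := W.add_mem hr (W.smul_mem (q.coeff (k + 1) / p.coeff (k + 1)) hp)
    rwa [sub_add_cancel] at this

/-- A shift-invariant subspace of sequences containing `n ↦ p n * c ^ n` with `p` of degree
exactly `l - 1` contains all of `G c l`. -/
theorem stmt_11 (V : Submodule ℂ (ℕ → ℂ)) (hinv : ∀ y ∈ V, shiftOp y ∈ V)
    (c : ℂ) (hc : c ≠ 0) (l : ℕ) (hl : 0 < l)
    (p : Polynomial ℂ) (hp : p.degree = ((l - 1 : ℕ) : WithBot ℕ))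
    (hpV : (fun n : ℕ => p.eval (n : ℂ) * c ^ n) ∈ V) :
    G c l ≤ V := by
  have hW : ∀ q ∈ V.comap (seqOfPoly c), taylor 1 q ∈ V.comap (seqOfPoly c) := by
    intro q hq
    have h := V.smul_mem c⁻¹ (hinv _ hq)
    have e : seqOfPoly c (taylor 1 q) = c⁻¹ • shiftOp (seqOfPoly c q) := by
      funext n
      simp only [seqOfPoly, shiftOp, LinearMap.coe_mk, AddHom.coe_mk, Pi.smul_apply, smul_eq_mul,
        taylor_eval, Nat.cast_add, Nat.cast_one]
      field_simp
      ring
    rw [Submodule.mem_comap, e]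
    exact h
  have hpW : p ∈ V.comap (seqOfPoly c) := by
    have e : seqOfPoly c p = fun n : ℕ => p.eval (n : ℂ) * c ^ n := by
      funext n
      exact mul_comm _ _
    rw [Submodule.mem_comap, e]
    exact hpV
  have hnat : p.natDegree = l - 1 := natDegree_eq_of_degree_eq_some hp
  rw [G, Submodule.map_le_iff_le_comap]
  intro q hq
  refine mem_of_taylor_stable _ hW (l - 1) p hpW hnat.le (coeff_ne_zero_of_eq_degree hp) q ?_
  rw [mem_degreeLT] at hq
  have : q.natDegree < l := by
    rcases eq_or_ne q 0 with rfl | h0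
    · simpa using hl
    · exact (natDegree_lt_iff_degree_lt h0).2 hq
  omega
end
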